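/- (Backward propagation bound, sparse version.) There exist absolute constants C, c > 0 such that if m ≥ C·n·L·log(n·L) and s is an integer with d/(C·log m) ≤ s ≤ m/(C·L·log m), then with probability at least 1 − e^{−c·s·log m} over the random matrices A, W_1,…,W_L, B: for all i ∈ [n] and all a ∈ {1,…,L+1}, |vᵀ B D_{i,L} W_L ⋯ D_{i,a} W_a u| ≤ C·√((s·log m)/d)·‖v‖·‖u‖ for every v ∈ ℝ^d and every u ∈ ℝ^m with at most s nonzero entries (for a = L+1 the product D_{i,L} W_L ⋯ D_{i,a} W_a is interpreted as the identity, i.e. the bound is for |vᵀ B u|). -/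

import Mathlib

/-!
The bound is proved by a moment method for one fixed vector `u`, followed by a union bound over a
finite grid of sparse vectors; the vector `v` only enters through Cauchy–Schwarz.

Fix a sample, a starting layer and `u`, and let `z` be the vector propagated from `u` through the
gated layers and `h` the forward vector. Conditionally on the past, a row `w` of the next weight
matrix contributes `⟨w, z⟩² 1{⟨w, h⟩ ≥ 0}` to the new squared norm. Since `w` and `-w` have the same
law and the square is even, when `h ≠ 0` the sign gate acts like an independent fair coin
(`two_mul_lintegral_gated`), although `z` and `h` are correlated. The variance `2 / m` compensates
the coin, so one layer multiplies the `r`-th moment of `‖z‖²` by at most `exp (8 r² / m)`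
(`layer_moment`), and the output layer multiplies it by at most `(4 r / d) ^ r exp (-r) 2 ^ d`
(`output_moment`). Integrating the layers out one at a time (`lintegral_runSteps_le`) and applying
Markov's inequality gives `back_tail`, on the event that the forward vector never vanishes. A
forward vector vanishes only if all `m` signs of some layer are nonpositive, so this has probability
at most `2 ^ (L + 1 - m)` (`dead_prob`).

Put `Λ = s log m` and take `r = C Λ / 8`. The upper bound on `s` makes `8 r² L / m ≤ r`, the lower
bound makes `2 ^ d ≤ exp (C Λ)`, and a large `C` leaves a failure probability `exp (-C Λ)` for each
vector. This absorbs the union over the samples, the layers and a grid of `(m (2 m + 1)) ^ s` sparse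
vectors (`compl_measure_le`). Rounding a sparse vector to the grid loses only a factor two in the
bound (`bound_of_net`).
-/

open MeasureTheory ProbabilityTheory

noncomputable section

namespace DNNPaper

/-! ### Elementary linear algebra on plain function matrices -/

def mulVec {p q : ℕ} (M : Fin p → Fin q → ℝ) (v : Fin q → ℝ) : Fin p → ℝ :=
  fun i => ∑ j, M i j * v j

def mmul {p q r : ℕ} (M : Fin p → Fin q → ℝ) (N : Fin q → Fin r → ℝ) :
    Fin p → Fin r → ℝ :=
  fun i k => ∑ j, M i j * N j k

def transpose {p q : ℕ} (M : Fin p → Fin q → ℝ) : Fin q → Fin p → ℝ :=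
  fun j i => M i j

def dot {p : ℕ} (u v : Fin p → ℝ) : ℝ := ∑ i, u i * v i

def outer {p q : ℕ} (u : Fin p → ℝ) (v : Fin q → ℝ) : Fin p → Fin q → ℝ :=
  fun i j => u i * v j

def idMat (p : ℕ) : Fin p → Fin p → ℝ := fun i j => if i = j then 1 else 0

def diagMat {p : ℕ} (dg : Fin p → ℝ) : Fin p → Fin p → ℝ :=
  fun i j => if i = j then dg i else 0

def relu {p : ℕ} (v : Fin p → ℝ) : Fin p → ℝ := fun k => max (v k) 0

/-- diagonal entries of the ReLU sign matrix of a pre-activation vector -/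
def signOf {p : ℕ} (g : Fin p → ℝ) : Fin p → ℝ := fun k => if 0 ≤ g k then 1 else 0

/-- Euclidean norm -/
def l2 {p : ℕ} (v : Fin p → ℝ) : ℝ := Real.sqrt (∑ k, v k ^ 2)

/-- max-norm -/
def linf {p : ℕ} (v : Fin p → ℝ) : ℝ := ⨆ k, |v k|

/-- number of nonzero entries -/
def l0 {p : ℕ} (v : Fin p → ℝ) : ℕ := (Finset.univ.filter fun k => v k ≠ 0).card

/-- Frobenius norm -/
def frob {p q : ℕ} (M : Fin p → Fin q → ℝ) : ℝ := Real.sqrt (∑ i, ∑ j, M i j ^ 2)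

/-- spectral norm (ℓ₂ operator norm) -/
def spec {p q : ℕ} (M : Fin p → Fin q → ℝ) : ℝ :=
  sSup {r | ∃ v : Fin q → ℝ, l2 v ≤ 1 ∧ r = l2 (mulVec M v)}

/-- trace (Frobenius) inner product -/
def innerF {p q : ℕ} (M N : Fin p → Fin q → ℝ) : ℝ := ∑ i, ∑ j, M i j * N i j

/-- `‖W‖₂ = max_ℓ ‖W_ℓ‖₂` for a tuple of matrices -/
def tupleSpec {m L : ℕ} (W : Fin L → Fin m → Fin m → ℝ) : ℝ := ⨆ ℓ, spec (W ℓ)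

/-! ### The network -/

variable {𝔡 m d L : ℕ}

/-- `Wat W ℓ` is the weight matrix of layer `ℓ ∈ {1,…,L}` (identity outside this range). -/
def Wat (W : Fin L → Fin m → Fin m → ℝ) (ℓ : ℕ) : Fin m → Fin m → ℝ :=
  if h : 1 ≤ ℓ ∧ ℓ ≤ L then W ⟨ℓ - 1, by omega⟩ else idMat m

/-- the forward (post-activation) vectors `h_ℓ`, `ℓ = 0,1,…,L` -/
def hseq (A : Fin m → Fin 𝔡 → ℝ) (W : Fin L → Fin m → Fin m → ℝ) (x : Fin 𝔡 → ℝ) :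
    ℕ → Fin m → ℝ
  | 0 => relu (mulVec A x)
  | ℓ + 1 =>
      if ℓ + 1 ≤ L then relu (mulVec (Wat W (ℓ + 1)) (hseq A W x ℓ)) else hseq A W x ℓ

/-- the pre-activation vectors `g_ℓ`, `ℓ = 0,1,…,L` -/
def gseq (A : Fin m → Fin 𝔡 → ℝ) (W : Fin L → Fin m → Fin m → ℝ) (x : Fin 𝔡 → ℝ) :
    ℕ → Fin m → ℝ
  | 0 => mulVec A x
  | ℓ + 1 => mulVec (Wat W (ℓ + 1)) (hseq A W x ℓ)

/-- `chainProd W Dfun a b = (D_b W_b) (D_{b-1} W_{b-1}) ⋯ (D_a W_a)` where `D_ℓ` is the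
diagonal matrix with entries `Dfun ℓ`; it is the identity when `b < a`, and factors with
index outside `{1,…,L}` are skipped. -/
def chainProd (W : Fin L → Fin m → Fin m → ℝ) (Dfun : ℕ → Fin m → ℝ) (a : ℕ) :
    ℕ → Fin m → Fin m → ℝ
  | 0 => idMat m
  | b + 1 =>
      if a ≤ b + 1 ∧ b + 1 ≤ L then
        mmul (mmul (diagMat (Dfun (b + 1))) (Wat W (b + 1))) (chainProd W Dfun a b)
      else chainProd W Dfun a b

/-- `prodDW A W x a b = D_b W_b D_{b-1} W_{b-1} ⋯ D_a W_a` with the sign matrices of input `x` -/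
def prodDW (A : Fin m → Fin 𝔡 → ℝ) (W : Fin L → Fin m → Fin m → ℝ) (x : Fin 𝔡 → ℝ)
    (a b : ℕ) : Fin m → Fin m → ℝ :=
  chainProd W (fun ℓ => signOf (gseq A W x ℓ)) a b

/-- `Back_ℓ = B D_L W_L ⋯ D_ℓ W_ℓ` (equal to `B` for `ℓ = L+1`) -/
def backMat (B : Fin d → Fin m → ℝ) (A : Fin m → Fin 𝔡 → ℝ)
    (W : Fin L → Fin m → Fin m → ℝ) (x : Fin 𝔡 → ℝ) (ℓ : ℕ) : Fin d → Fin m → ℝ :=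
  mmul B (prodDW A W x ℓ L)

/-- formula gradient w.r.t. `W_ℓ` with an arbitrary (fake) loss vector `v`:
`D_ℓ (Back_{ℓ+1}ᵀ v) h_{ℓ-1}ᵀ` -/
def gradW (B : Fin d → Fin m → ℝ) (A : Fin m → Fin 𝔡 → ℝ)
    (W : Fin L → Fin m → Fin m → ℝ) (x : Fin 𝔡 → ℝ) (v : Fin d → ℝ) (ℓ : ℕ) :
    Fin m → Fin m → ℝ :=
  outer (mulVec (diagMat (signOf (gseq A W x ℓ)))
      (mulVec (transpose (backMat B A W x (ℓ + 1))) v))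
    (hseq A W x (ℓ - 1))

/-- loss vector `B h_L − y` -/
def lossVec (B : Fin d → Fin m → ℝ) (A : Fin m → Fin 𝔡 → ℝ)
    (W : Fin L → Fin m → Fin m → ℝ) (x : Fin 𝔡 → ℝ) (y : Fin d → ℝ) : Fin d → ℝ :=
  fun j => mulVec B (hseq A W x L) j - y j

/-- per-sample ℓ₂ regression loss `F_i` -/
def objFi (B : Fin d → Fin m → ℝ) (A : Fin m → Fin 𝔡 → ℝ)
    (W : Fin L → Fin m → Fin m → ℝ) (x : Fin 𝔡 → ℝ) (y : Fin d → ℝ) : ℝ :=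
  (1 / 2) * l2 (lossVec B A W x y) ^ 2

/-- total objective `F` -/
def objF {n : ℕ} (B : Fin d → Fin m → ℝ) (A : Fin m → Fin 𝔡 → ℝ)
    (W : Fin L → Fin m → Fin m → ℝ) (x : Fin n → Fin 𝔡 → ℝ)
    (y : Fin n → Fin d → ℝ) : ℝ :=
  ∑ i, objFi B A W (x i) (y i)

/-- formula gradient of the total objective w.r.t. `W_ℓ` -/
def gradF {n : ℕ} (B : Fin d → Fin m → ℝ) (A : Fin m → Fin 𝔡 → ℝ)
    (W : Fin L → Fin m → Fin m → ℝ) (x : Fin n → Fin 𝔡 → ℝ)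
    (y : Fin n → Fin d → ℝ) (ℓ : ℕ) : Fin m → Fin m → ℝ :=
  ∑ i, gradW B A W (x i) (lossVec B A W (x i) (y i)) ℓ

/-! ### Random initialization -/

/-- a `p × q` random matrix with i.i.d. `N(0, v)` entries -/
def gaussMat (p q : ℕ) (v : NNReal) : Measure (Fin p → Fin q → ℝ) :=
  Measure.pi fun _ => Measure.pi fun _ => gaussianReal 0 v

/-- joint law of `(A, W)` at random initialization -/
def initAW (𝔡 m L : ℕ) :
    Measure ((Fin m → Fin 𝔡 → ℝ) × (Fin L → Fin m → Fin m → ℝ)) :=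
  (gaussMat m 𝔡 (2 / m)).prod (Measure.pi fun _ : Fin L => gaussMat m m (2 / m))

/-- joint law of `(A, W, B)` at random initialization -/
def initMeasure (𝔡 m d L : ℕ) :
    Measure ((Fin m → Fin 𝔡 → ℝ) ×
      (Fin L → Fin m → Fin m → ℝ) × (Fin d → Fin m → ℝ)) :=
  (gaussMat m 𝔡 (2 / m)).prod
    ((Measure.pi fun _ : Fin L => gaussMat m m (2 / m)).prod (gaussMat d m (1 / d)))

/-! ### Gaussian rows -/

/-- The law of a vector with i.i.d. `N(0, v)` entries, i.e. of a row of `gaussMat p q v`. -/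
def gaussVec (q : ℕ) (v : NNReal) : Measure (Fin q → ℝ) :=
  Measure.pi fun _ => gaussianReal 0 v

instance (q : ℕ) (v : NNReal) : IsProbabilityMeasure (gaussVec q v) := by
  unfold gaussVec; infer_instance

instance (p q : ℕ) (v : NNReal) : IsProbabilityMeasure (gaussMat p q v) := by
  unfold gaussMat; infer_instance

/-- Squared Euclidean norm. -/
def sqn {p : ℕ} (v : Fin p → ℝ) : ℝ := ∑ k, v k ^ 2

lemma sqn_nonneg {p : ℕ} (v : Fin p → ℝ) : 0 ≤ sqn v :=
  Finset.sum_nonneg fun _ _ => sq_nonneg _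

lemma sqn_eq_zero {p : ℕ} {v : Fin p → ℝ} (h : sqn v = 0) : v = 0 := by
  funext k
  have := (Finset.sum_eq_zero_iff_of_nonneg (fun _ _ => sq_nonneg _)).1 h k (Finset.mem_univ k)
  simpa using this

lemma sqn_pos {p : ℕ} {v : Fin p → ℝ} (h : v ≠ 0) : 0 < sqn v :=
  lt_of_le_of_ne (sqn_nonneg v) fun h' => h (sqn_eq_zero h'.symm)

lemma measurable_dot_left {q : ℕ} (z : Fin q → ℝ) : Measurable fun w : Fin q → ℝ => dot w z := by
  unfold dot; fun_prop

lemma map_dot_gaussVec {q : ℕ} (v : NNReal) (z : Fin q → ℝ) :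
    (gaussVec q v).map (fun w => dot w z) = gaussianReal 0 ((sqn z).toNNReal * v) := by
  have hind : iIndepFun (fun (j : Fin q) (w : Fin q → ℝ) => z j * w j) (gaussVec q v) :=
    iIndepFun_pi (μ := fun _ : Fin q => gaussianReal 0 v) (X := fun j x => z j * x)
      (fun j => by fun_prop)
  have hlaw : ∀ j, (gaussVec q v).map (fun w : Fin q → ℝ => z j * w j)
      = gaussianReal 0 ((z j ^ 2).toNNReal * v) := by
    intro j
    have h1 : (gaussVec q v).map (fun w : Fin q → ℝ => w j) = gaussianReal 0 v :=
      (measurePreserving_eval (fun _ : Fin q => gaussianReal 0 v) j).map_eq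
    have h2 : (fun w : Fin q → ℝ => z j * w j) = (fun x => z j * x) ∘ (fun w => w j) := rfl
    rw [h2, ← Measure.map_map (by fun_prop) (by fun_prop), h1, gaussianReal_map_const_mul]
    congr 1
    · simp
    · congr 1
      ext
      simp [sq_nonneg]
  have key : ∀ s : Finset (Fin q), (gaussVec q v).map (fun w => ∑ j ∈ s, z j * w j)
      = gaussianReal 0 ((∑ j ∈ s, z j ^ 2).toNNReal * v) := by
    intro s
    induction s using Finset.induction_on with
    | empty => simp [gaussianReal_zero_var]
    | insert a s ha ih =>
      have hi := hind.indepFun_finsetSum_of_notMem (fun j => by fun_prop) ha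
      have hi' : IndepFun (fun w => ∑ j ∈ s, z j * w j) (fun w => z a * w a) (gaussVec q v) := by
        convert hi using 1
        funext w; simp
      have := gaussianReal_add_gaussianReal_of_indepFun hi' ih (hlaw a)
      rw [show (fun w : Fin q → ℝ => ∑ j ∈ insert a s, z j * w j)
        = (fun w => ∑ j ∈ s, z j * w j) + (fun w => z a * w a) from ?_, this,
        Finset.sum_insert ha, add_comm (z a ^ 2), Real.toNNReal_add
          (Finset.sum_nonneg fun _ _ => sq_nonneg _) (sq_nonneg _), add_mul, add_zero]
      funext w
      simp [Finset.sum_insert ha, add_comm]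
  have := key Finset.univ
  unfold sqn
  rw [← this]
  congr 1
  funext w
  simp [dot, mul_comm]

/-- The moment generating function of the square of a centred Gaussian. -/
lemma lintegral_exp_sq_gaussianReal {σ : NNReal} (hσ : σ ≠ 0) {θ : ℝ} (h : 2 * θ * σ < 1) :
    ∫⁻ x, ENNReal.ofReal (Real.exp (θ * x ^ 2)) ∂gaussianReal 0 σ
      = ENNReal.ofReal (Real.sqrt (1 / (1 - 2 * θ * σ))) := by
  have hσ' : (0 : ℝ) < σ := by positivity
  rw [gaussianReal_of_var_ne_zero _ hσ, lintegral_withDensity_eq_lintegral_mul _ (by fun_prop)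
    (by fun_prop)]
  have hb : 0 < (1 - 2 * θ * σ) / (2 * σ) := by
    apply div_pos <;> linarith
  have hpt : ∀ x : ℝ, (gaussianPDF 0 σ * fun x => ENNReal.ofReal (Real.exp (θ * x ^ 2))) x
      = ENNReal.ofReal ((Real.sqrt (2 * Real.pi * σ))⁻¹
        * Real.exp (-((1 - 2 * θ * σ) / (2 * σ)) * x ^ 2)) := by
    intro x
    simp only [Pi.mul_apply, gaussianPDF, gaussianPDFReal]
    rw [← ENNReal.ofReal_mul (by positivity), mul_assoc, ← Real.exp_add]
    congr 3
    field_simp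
    ring
  simp_rw [hpt]
  rw [← ofReal_integral_eq_lintegral_ofReal ((integrable_exp_neg_mul_sq hb).const_mul _)
    (Filter.Eventually.of_forall fun x => by positivity), integral_const_mul, integral_gaussian,
    ← Real.sqrt_inv, ← Real.sqrt_mul (by positivity)]
  congr 2
  have := Real.pi_pos
  have h3 : 1 - 2 * θ * σ ≠ 0 := by linarith
  field_simp

lemma lintegral_exp_sq_dot {q : ℕ} {v : NNReal} (hv : v ≠ 0) {z : Fin q → ℝ} (hz : z ≠ 0) {θ : ℝ}
    (h : 2 * θ * (sqn z * v) < 1) :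
    ∫⁻ w, ENNReal.ofReal (Real.exp (θ * dot w z ^ 2)) ∂gaussVec q v
      = ENNReal.ofReal (Real.sqrt (1 / (1 - 2 * θ * (sqn z * v)))) := by
  have hp := sqn_pos hz
  have h0 : (((sqn z).toNNReal * v : NNReal) : ℝ) = sqn z * v := by
    rw [NNReal.coe_mul, Real.coe_toNNReal _ hp.le]
  have hne : (sqn z).toNNReal * v ≠ 0 := by
    refine mul_ne_zero ?_ hv
    simpa using hp
  rw [← h0] at h ⊢
  rw [← lintegral_exp_sq_gaussianReal hne h, ← map_dot_gaussVec,
    lintegral_map (by fun_prop) (measurable_dot_left z)]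

lemma ae_gaussVec_dot_ne_zero {q : ℕ} {v : NNReal} (hv : v ≠ 0) {z : Fin q → ℝ} (hz : z ≠ 0) :
    ∀ᵐ w ∂gaussVec q v, dot w z ≠ 0 := by
  have hp := sqn_pos hz
  have hne : (sqn z).toNNReal * v ≠ 0 := by
    refine mul_ne_zero ?_ hv
    simpa using hp
  have h1 : ∀ᵐ x ∂(gaussVec q v).map (fun w => dot w z), x ≠ 0 := by
    rw [map_dot_gaussVec]
    apply (gaussianReal_absolutelyContinuous 0 hne).ae_le
    exact compl_mem_ae_iff.2 (Real.volume_singleton (a := 0))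
  exact ae_of_ae_map (measurable_dot_left z).aemeasurable h1

lemma map_neg_gaussVec (q : ℕ) (v : NNReal) :
    MeasurePreserving (fun w : Fin q → ℝ => -w) (gaussVec q v) (gaussVec q v) := by
  unfold gaussVec
  refine measurePreserving_pi (fun _ : Fin q => gaussianReal 0 v) (fun _ => gaussianReal 0 v)
    (f := fun _ x => -x) fun _ => ⟨by fun_prop, ?_⟩
  simpa using gaussianReal_map_neg (μ := 0) (v := v)

lemma dot_neg_left {q : ℕ} (w z : Fin q → ℝ) : dot (-w) z = -dot w z := by simp [dot]

/-- Under a Gaussian matrix the rows are independent, so products of row functions factor. -/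
lemma lintegral_gaussMat_prod (p q : ℕ) (v : NNReal) {f : (Fin q → ℝ) → ENNReal}
    (hf : Measurable f) :
    ∫⁻ M, ∏ k, f (M k) ∂gaussMat p q v = (∫⁻ w, f w ∂gaussVec q v) ^ p := by
  have hind : iIndepFun (fun (k : Fin p) (M : Fin p → Fin q → ℝ) => f (M k)) (gaussMat p q v) :=
    iIndepFun_pi (μ := fun _ : Fin p => gaussVec q v) (X := fun _ => f) (fun _ => hf.aemeasurable)
  rw [lintegral_prod_eq_prod_lintegral_of_indepFun _ _ hind (fun k => by fun_prop)]
  have : ∀ k : Fin p, ∫⁻ M, f (M k) ∂gaussMat p q v = ∫⁻ w, f w ∂gaussVec q v := fun k =>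
    (measurePreserving_eval (fun _ : Fin p => gaussVec q v) k).lintegral_comp hf
  simp [this]

/-- Reflection `w ↦ -w` shows that gating a Gaussian row by the sign of `⟨w, h⟩` acts like an
independent fair coin on any function of `⟨w, z⟩²`. -/
lemma two_mul_lintegral_gated {q : ℕ} {v : NNReal} (hv : v ≠ 0) {h : Fin q → ℝ} (hh : h ≠ 0)
    (z : Fin q → ℝ) {θ : ℝ} :
    2 * ∫⁻ w, ENNReal.ofReal (Real.exp (θ * (if 0 ≤ dot w h then dot w z ^ 2 else 0)))
        ∂gaussVec q v
      = 1 + ∫⁻ w, ENNReal.ofReal (Real.exp (θ * dot w z ^ 2)) ∂gaussVec q v := by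
  have hd := measurable_dot_left h
  have hz := measurable_dot_left z
  have hm : Measurable fun w : Fin q → ℝ =>
      ENNReal.ofReal (Real.exp (θ * (if 0 ≤ dot w h then dot w z ^ 2 else 0))) := by
    refine ENNReal.measurable_ofReal.comp (Real.measurable_exp.comp (Measurable.const_mul ?_ _))
    exact Measurable.ite (measurableSet_le measurable_const hd) (hz.pow_const 2) measurable_const
  have hneg := (map_neg_gaussVec q v).lintegral_comp hm
  rw [two_mul]
  nth_rw 2 [← hneg]
  rw [← lintegral_add_left hm]
  have h1 : (1 : ENNReal) = ∫⁻ _, 1 ∂gaussVec q v := by simp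
  rw [h1, ← lintegral_add_left measurable_const]
  apply lintegral_congr_ae
  filter_upwards [ae_gaussVec_dot_ne_zero hv hh] with w hw
  simp only [dot_neg_left, neg_sq]
  rcases lt_or_gt_of_ne hw with h' | h'
  · rw [if_neg (by linarith), if_pos (by linarith)]; simp
  · rw [if_pos (by linarith), if_neg (by linarith)]; simp [add_comm]

lemma gaussVec_dot_nonpos {q : ℕ} {v : NNReal} (hv : v ≠ 0) {h : Fin q → ℝ} (hh : h ≠ 0) :
    gaussVec q v {w | dot w h ≤ 0} = 1 / 2 := by
  have hd := measurable_dot_left h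
  have hm : MeasurableSet {w : Fin q → ℝ | dot w h ≤ 0} := measurableSet_le hd measurable_const
  have h1 : gaussVec q v {w | dot w h ≤ 0}ᶜ = gaussVec q v {w | dot w h ≤ 0} := by
    rw [← (map_neg_gaussVec q v).measure_preimage hm.nullMeasurableSet]
    apply measure_congr
    filter_upwards [ae_gaussVec_dot_ne_zero hv hh] with w hw
    apply propext
    change (¬ dot w h ≤ 0) ↔ dot (-w) h ≤ 0
    rw [dot_neg_left]
    constructor
    · intro h; linarith
    · intro h h'; exact hw (by linarith)
  have h2 := measure_add_measure_compl (μ := gaussVec q v) hm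
  rw [h1, measure_univ, ← two_mul] at h2
  rw [ENNReal.eq_div_iff (by simp) (by simp), h2]

/-! ### One layer -/

/-- Optimised form of `x ≤ exp (x - 1)`, turning moments into exponential moments. -/
lemma rpow_le_exp {y q p : ℝ} (hy : 0 ≤ y) (hq : 0 < q) (hp : 0 ≤ p) :
    y ^ p ≤ q ^ p * Real.exp (-p) * Real.exp (p / q * y) := by
  have h1 : y / q ≤ Real.exp (y / q - 1) := by
    have := Real.add_one_le_exp (y / q - 1); linarith
  have h2 : y ≤ q * Real.exp (y / q - 1) := by
    calc y = q * (y / q) := by field_simp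
      _ ≤ _ := by gcongr
  calc y ^ p ≤ (q * Real.exp (y / q - 1)) ^ p := Real.rpow_le_rpow hy h2 hp
    _ = q ^ p * Real.exp (-p) * Real.exp (p / q * y) := by
      rw [Real.mul_rpow hq.le (Real.exp_pos _).le, ← Real.exp_mul, mul_assoc, ← Real.exp_add]
      congr 2
      field_simp
      ring

/-- The vector `y` with the coordinates at which `g` is negative set to zero. -/
def gate {p : ℕ} (g y : Fin p → ℝ) : Fin p → ℝ := fun k => signOf g k * y k

lemma mulVec_diagMat {p : ℕ} (g y : Fin p → ℝ) : mulVec (diagMat (signOf g)) y = gate g y := by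
  funext k
  simp [mulVec, diagMat, gate]

lemma sqn_gate_mulVec {p q : ℕ} (M : Fin p → Fin q → ℝ) (h z : Fin q → ℝ) :
    sqn (gate (mulVec M h) (mulVec M z))
      = ∑ k, if 0 ≤ dot (M k) h then dot (M k) z ^ 2 else 0 := by
  unfold sqn gate signOf
  refine Finset.sum_congr rfl fun k _ => ?_
  change ((if 0 ≤ dot (M k) h then (1 : ℝ) else 0) * dot (M k) z) ^ 2 = _
  split_ifs <;> simp

/-- Exponential moments bound `p`-th moments for a sum of i.i.d. row contributions. -/
lemma lintegral_rpow_sum_le {p q : ℕ} {v : NNReal} {f : (Fin q → ℝ) → ℝ} (hf : Measurable f)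
    (hf0 : ∀ w, 0 ≤ f w) {r Q : ℝ} (hr : 0 ≤ r) (hQ : 0 < Q) {I : ℝ} (hI0 : 0 ≤ I)
    (hI : ∫⁻ w, ENNReal.ofReal (Real.exp (r / Q * f w)) ∂gaussVec q v ≤ ENNReal.ofReal I) :
    ∫⁻ M, ENNReal.ofReal ((∑ k, f (M k)) ^ r) ∂gaussMat p q v
      ≤ ENNReal.ofReal (Q ^ r * Real.exp (-r) * I ^ p) := by
  have hc : 0 ≤ Q ^ r * Real.exp (-r) := by positivity
  calc ∫⁻ M, ENNReal.ofReal ((∑ k, f (M k)) ^ r) ∂gaussMat p q v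
      ≤ ∫⁻ M, ENNReal.ofReal (Q ^ r * Real.exp (-r))
          * ∏ k, ENNReal.ofReal (Real.exp (r / Q * f (M k))) ∂gaussMat p q v := by
        refine lintegral_mono fun M => ?_
        rw [← ENNReal.ofReal_prod_of_nonneg (fun _ _ => (Real.exp_pos _).le),
          ← ENNReal.ofReal_mul hc, ← Real.exp_sum, ← Finset.mul_sum]
        exact ENNReal.ofReal_le_ofReal
          (rpow_le_exp (Finset.sum_nonneg fun _ _ => hf0 _) hQ hr)
    _ = ENNReal.ofReal (Q ^ r * Real.exp (-r))
          * (∫⁻ w, ENNReal.ofReal (Real.exp (r / Q * f w)) ∂gaussVec q v) ^ p := by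
        rw [lintegral_const_mul' _ _ ENNReal.ofReal_ne_top]
        congr 1
        exact lintegral_gaussMat_prod p q v
          (f := fun w => ENNReal.ofReal (Real.exp (r / Q * f w))) (by fun_prop)
    _ ≤ ENNReal.ofReal (Q ^ r * Real.exp (-r)) * ENNReal.ofReal I ^ p := by gcongr
    _ = _ := by rw [← ENNReal.ofReal_pow hI0, ← ENNReal.ofReal_mul hc]

lemma sqrt_inv_le {y : ℝ} (h0 : 0 ≤ y) (h1 : y ≤ 1 / 4) :
    Real.sqrt (1 / (1 - y)) ≤ 1 + y / 2 + y ^ 2 := by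
  rw [Real.sqrt_le_left (by positivity), div_le_iff₀ (by linarith)]
  have : (1 + y / 2 + y ^ 2) ^ 2 * (1 - y)
      = 1 + y ^ 2 * (5 / 4 - 5 / 4 * y - y ^ 3) := by ring
  rw [this]
  have h3 : y ^ 3 ≤ (1 / 4) ^ 3 := pow_le_pow_left₀ h0 h1 3
  have : 0 ≤ y ^ 2 * (5 / 4 - 5 / 4 * y - y ^ 3) := by
    apply mul_nonneg (sq_nonneg _)
    linarith
  linarith

/-- One gated Gaussian layer inflates the `r`-th moment of the squared norm by at most
`exp (8 r² / m)`. -/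
lemma layer_moment {m q : ℕ} (hm : 0 < m) {h : Fin q → ℝ} (hh : h ≠ 0) (z : Fin q → ℝ) {r : ℝ}
    (hr : 0 < r) (hrm : r ≤ m / 16) :
    ∫⁻ M, ENNReal.ofReal (sqn (gate (mulVec M h) (mulVec M z)) ^ r) ∂gaussMat m q (2 / m)
      ≤ ENNReal.ofReal (Real.exp (8 * r ^ 2 / m)) * ENNReal.ofReal (sqn z ^ r) := by
  have hm' : (0 : ℝ) < m := by exact_mod_cast hm
  have hv : (2 / m : NNReal) ≠ 0 := by positivity
  simp_rw [sqn_gate_mulVec]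
  rcases eq_or_ne z 0 with rfl | hz
  · simp [dot, sqn, Real.zero_rpow hr.ne']
  have hp := sqn_pos hz
  set t : ℝ := r / m with ht
  have ht0 : 0 < t := by positivity
  have ht1 : t ≤ 1 / 16 := by rw [ht, div_le_iff₀ hm']; linarith
  have hd := measurable_dot_left h
  have hzz := measurable_dot_left z
  have hmeas : Measurable fun w : Fin q → ℝ => if 0 ≤ dot w h then dot w z ^ 2 else 0 :=
    Measurable.ite (measurableSet_le measurable_const hd) (hzz.pow_const 2) measurable_const
  have h4 : 2 * (r / sqn z) * (sqn z * ((2 / m : NNReal) : ℝ)) = 4 * t := by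
    push_cast
    rw [ht]; field_simp; ring
  have hI : ∫⁻ w, ENNReal.ofReal
      (Real.exp (r / sqn z * (if 0 ≤ dot w h then dot w z ^ 2 else 0))) ∂gaussVec q (2 / m)
      ≤ ENNReal.ofReal (Real.exp (t + 8 * t ^ 2)) := by
    have e := two_mul_lintegral_gated hv hh z (θ := r / sqn z)
    rw [lintegral_exp_sq_dot hv hz (by rw [h4]; linarith), h4] at e
    have e2 : 1 + ENNReal.ofReal (Real.sqrt (1 / (1 - 4 * t)))
        ≤ 2 * ENNReal.ofReal (Real.exp (t + 8 * t ^ 2)) := by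
      rw [← ENNReal.ofReal_one, ← ENNReal.ofReal_add zero_le_one (Real.sqrt_nonneg _),
        show (2 : ENNReal) = ENNReal.ofReal 2 by simp, ← ENNReal.ofReal_mul (by norm_num)]
      apply ENNReal.ofReal_le_ofReal
      have h5 := sqrt_inv_le (y := 4 * t) (by linarith) (by linarith)
      have h6 := Real.add_one_le_exp (t + 8 * t ^ 2)
      nlinarith
    rw [← e] at e2
    exact (ENNReal.mul_le_mul_iff_right (by simp) (by simp)).1 e2
  refine (lintegral_rpow_sum_le hmeas (fun w => by split_ifs <;> positivity) hr.le hp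
    (Real.exp_pos _).le hI).trans ?_
  rw [← ENNReal.ofReal_mul (Real.exp_pos _).le]
  apply ENNReal.ofReal_le_ofReal
  rw [← Real.exp_nat_mul, mul_assoc, ← Real.exp_add, mul_comm]
  gcongr
  apply le_of_eq
  rw [ht]; field_simp; ring

/-- Moments of the squared norm after the output layer. -/
lemma output_moment {d m : ℕ} (hd : 0 < d) (z : Fin m → ℝ) {r : ℝ} (hr : 0 < r) :
    ∫⁻ B, ENNReal.ofReal (sqn (mulVec B z) ^ r) ∂gaussMat d m (1 / d)
      ≤ ENNReal.ofReal ((4 * r / d) ^ r * Real.exp (-r) * 2 ^ d)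
        * ENNReal.ofReal (sqn z ^ r) := by
  have hd' : (0 : ℝ) < d := by exact_mod_cast hd
  have hv : (1 / d : NNReal) ≠ 0 := by positivity
  rcases eq_or_ne z 0 with rfl | hz
  · simp [mulVec, sqn, Real.zero_rpow hr.ne']
  have hp := sqn_pos hz
  set Q : ℝ := 4 * r / d * sqn z with hQd
  have hQ : 0 < Q := by positivity
  have hzz := measurable_dot_left z
  have h4 : 2 * (r / Q) * (sqn z * ((1 / d : NNReal) : ℝ)) = 1 / 2 := by
    push_cast
    rw [hQd]; field_simp; norm_num
  have hI : ∫⁻ w, ENNReal.ofReal (Real.exp (r / Q * dot w z ^ 2)) ∂gaussVec m (1 / d)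
      ≤ ENNReal.ofReal 2 := by
    rw [lintegral_exp_sq_dot hv hz (by rw [h4]; norm_num), h4]
    apply ENNReal.ofReal_le_ofReal
    rw [Real.sqrt_le_left (by norm_num)]
    norm_num
  refine (lintegral_rpow_sum_le (p := d) (hzz.pow_const 2) (fun w => by positivity) hr.le hQ
    (by norm_num) hI).trans ?_
  rw [← ENNReal.ofReal_mul (by positivity)]
  apply ENNReal.ofReal_le_ofReal
  rw [hQd, Real.mul_rpow (by positivity) hp.le]
  apply le_of_eq
  ring

lemma relu_eq_zero_iff {p : ℕ} (y : Fin p → ℝ) : relu y = 0 ↔ ∀ k, y k ≤ 0 := by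
  simp [relu, funext_iff]

/-- A Gaussian layer kills a nonzero vector with probability `2⁻ᵐ`. -/
lemma dead_layer {m q : ℕ} {v : NNReal} (hv : v ≠ 0) {h : Fin q → ℝ} (hh : h ≠ 0) :
    gaussMat m q v {M | relu (mulVec M h) = 0} = (1 / 2) ^ m := by
  have : {M : Fin m → Fin q → ℝ | relu (mulVec M h) = 0}
      = Set.univ.pi fun _ => {w | dot w h ≤ 0} := by
    ext M
    simp only [Set.mem_ofPred_eq, relu_eq_zero_iff, Set.mem_univ_pi]
    rfl
  rw [this]
  unfold gaussMat
  rw [Measure.pi_pi]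
  have := gaussVec_dot_nonpos hv hh
  unfold gaussVec at this
  simp [this]

/-! ### Integrating out the layers one at a time -/

/-- State of the recursion `σ ↦ step ℓ (w ℓ) σ` after `L` steps. -/
def runSteps {X S : Type*} (step : ℕ → X → S → S) (σ : S) : (L : ℕ) → (Fin L → X) → S
  | 0, _ => σ
  | L + 1, w => step L (w (Fin.last L)) (runSteps step σ L fun j => w j.castSucc)

/-- If every step multiplies the conditional expectation of the potential `φ` by at most `K`, then
`L` independent steps multiply it by at most `K ^ L`. -/
lemma lintegral_runSteps_le {X S : Type*} [MeasurableSpace X] {μ : Measure X}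
    [IsProbabilityMeasure μ] {step : ℕ → X → S → S} {φ : S → ENNReal} {K : ENNReal} (hK : K ≠ ⊤)
    (hstep : ∀ ℓ σ, ∫⁻ w, φ (step ℓ w σ) ∂μ ≤ K * φ σ) (σ : S) (L : ℕ) :
    ∫⁻ w, φ (runSteps step σ L w) ∂Measure.pi (fun _ : Fin L => μ) ≤ K ^ L * φ σ := by
  induction L with
  | zero => simp [runSteps]
  | succ L ih =>
    have hmp := measurePreserving_piFinSuccAbove (fun _ : Fin (L + 1) => μ) (Fin.last L)
    let G : (Fin L → X) × X → ENNReal := fun y => φ (step L y.2 (runSteps step σ L y.1))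
    have e1 : ∫⁻ w, φ (runSteps step σ (L + 1) w) ∂Measure.pi (fun _ : Fin (L + 1) => μ)
        = ∫⁻ y, G y.swap ∂(μ.prod (Measure.pi fun _ : Fin L => μ)) := by
      rw [← hmp.lintegral_comp_emb (MeasurableEquiv.measurableEmbedding _)]
      refine lintegral_congr fun w => ?_
      have e2 : (fun j : Fin L => w j.castSucc) = Fin.init w := rfl
      simp [G, runSteps, MeasurableEquiv.piFinSuccAbove, Fin.insertNthEquiv, e2]
    rw [e1, lintegral_prod_swap]
    calc ∫⁻ y, G y ∂((Measure.pi fun _ : Fin L => μ).prod μ)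
        ≤ ∫⁻ w', ∫⁻ w, G (w', w) ∂μ ∂(Measure.pi fun _ : Fin L => μ) := lintegral_prod_le _
      _ ≤ ∫⁻ w', K * φ (runSteps step σ L w') ∂(Measure.pi fun _ : Fin L => μ) :=
          lintegral_mono fun w' => hstep L _
      _ = K * ∫⁻ w', φ (runSteps step σ L w') ∂(Measure.pi fun _ : Fin L => μ) :=
          lintegral_const_mul' _ _ hK
      _ ≤ K * (K ^ L * φ σ) := by gcongr
      _ = K ^ (L + 1) * φ σ := by ring

/-- One layer acting on the pair (forward vector, propagated vector); the propagated vector is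
only touched from layer `a` on. -/
def layerStep {m : ℕ} (a ℓ : ℕ) (M : Fin m → Fin m → ℝ) (σ : (Fin m → ℝ) × (Fin m → ℝ)) :
    (Fin m → ℝ) × (Fin m → ℝ) :=
  (relu (mulVec M σ.1), if a ≤ ℓ + 1 then gate (mulVec M σ.1) (mulVec M σ.2) else σ.2)

lemma mulVec_mmul {p q r : ℕ} (M : Fin p → Fin q → ℝ) (N : Fin q → Fin r → ℝ) (u : Fin r → ℝ) :
    mulVec (mmul M N) u = mulVec M (mulVec N u) := by
  funext i
  simp only [mulVec, mmul, Finset.sum_mul, Finset.mul_sum]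
  rw [Finset.sum_comm]
  simp [mul_assoc]

lemma mulVec_idMat {p : ℕ} (u : Fin p → ℝ) : mulVec (idMat p) u = u := by
  funext i
  simp [mulVec, idMat]


lemma Wat_succ (W : Fin L → Fin m → Fin m → ℝ) {ℓ : ℕ} (h : ℓ < L) :
    Wat W (ℓ + 1) = W ⟨ℓ, h⟩ := by
  unfold Wat
  rw [dif_pos ⟨by omega, by omega⟩]
  rfl

lemma mulVec_prodDW_succ (A : Fin m → Fin 𝔡 → ℝ) (W : Fin L → Fin m → Fin m → ℝ) (x : Fin 𝔡 → ℝ)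
    (a : ℕ) (u : Fin m → ℝ) (ℓ : ℕ) :
    mulVec (prodDW A W x a (ℓ + 1)) u = if a ≤ ℓ + 1 ∧ ℓ + 1 ≤ L then
      gate (mulVec (Wat W (ℓ + 1)) (hseq A W x ℓ))
        (mulVec (Wat W (ℓ + 1)) (mulVec (prodDW A W x a ℓ) u))
      else mulVec (prodDW A W x a ℓ) u := by
  unfold prodDW
  rw [chainProd]
  split_ifs
  · rw [mulVec_mmul, mulVec_mmul, mulVec_diagMat]
    rfl
  · rfl

/-- The network dynamics is the abstract recursion driven by `layerStep`. -/
lemma state_eq_runSteps (A : Fin m → Fin 𝔡 → ℝ) (W : Fin L → Fin m → Fin m → ℝ) (x : Fin 𝔡 → ℝ)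
    (a : ℕ) (u : Fin m → ℝ) (ℓ : ℕ) (hℓ : ℓ ≤ L) :
    (hseq A W x ℓ, mulVec (prodDW A W x a ℓ) u)
      = runSteps (layerStep a) (relu (mulVec A x), u) ℓ (fun j => W (j.castLE hℓ)) := by
  induction ℓ with
  | zero => simp [runSteps, hseq, prodDW, chainProd, mulVec_idMat]
  | succ ℓ ih =>
    rw [runSteps]
    have ih' := ih (by omega)
    have e : (fun j : Fin ℓ => W (Fin.castLE hℓ j.castSucc))
        = fun j : Fin ℓ => W (Fin.castLE (by omega) j) := rfl
    rw [e, ← ih', mulVec_prodDW_succ, hseq, if_pos hℓ, Wat_succ W (show ℓ < L by omega)]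
    simp only [layerStep, hℓ, and_true]
    rfl

/-- The potential controlling the propagated vector; it vanishes once the forward vector is dead. -/
def livePot {p : ℕ} (r : ℝ) (σ : (Fin m → ℝ) × (Fin p → ℝ)) : ENNReal :=
  open Classical in if σ.1 = 0 then 0 else ENNReal.ofReal (sqn σ.2 ^ r)

/-- The potential detecting a dead forward vector. The additive `2⁻ᵐ` makes its growth per layer
multiplicative. -/
def deadPot (σ : (Fin m → ℝ) × (Fin m → ℝ)) : ENNReal :=
  open Classical in (if σ.1 = 0 then 1 else 0) + (1 / 2) ^ m

lemma livePot_le {p : ℕ} (r : ℝ) (σ : (Fin m → ℝ) × (Fin p → ℝ)) :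
    livePot r σ ≤ ENNReal.ofReal (sqn σ.2 ^ r) := by
  unfold livePot; split_ifs <;> simp

lemma relu_mulVec_zero {p q : ℕ} (M : Fin p → Fin q → ℝ) : relu (mulVec M 0) = 0 := by
  funext k; simp [relu, mulVec]

lemma livePot_step (hm : 0 < m) {r : ℝ} (hr : 0 < r) (hrm : r ≤ m / 16) (a ℓ : ℕ)
    (σ : (Fin m → ℝ) × (Fin m → ℝ)) :
    ∫⁻ M, livePot r (layerStep a ℓ M σ) ∂gaussMat m m (2 / m)
      ≤ ENNReal.ofReal (Real.exp (8 * r ^ 2 / m)) * livePot r σ := by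
  obtain ⟨h, z⟩ := σ
  by_cases hh : h = 0
  · subst hh
    simp [livePot, layerStep, relu_mulVec_zero]
  have e : livePot r (h, z) = ENNReal.ofReal (sqn z ^ r) := by simp [livePot, hh]
  rw [e]
  refine (lintegral_mono fun M => livePot_le r _).trans ?_
  by_cases ha : a ≤ ℓ + 1
  · simp only [layerStep, ha, if_true]
    exact layer_moment hm hh z hr hrm
  · simp only [layerStep, ha, if_false, lintegral_const, measure_univ, mul_one]
    refine le_mul_of_one_le_left (zero_le) ?_
    rw [ENNReal.one_le_ofReal, Real.one_le_exp_iff]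
    positivity

lemma lintegral_dead_le {q : ℕ} {v : NNReal} (hv : v ≠ 0) {h : Fin q → ℝ} (hh : h ≠ 0)
    (f : (Fin m → Fin q → ℝ) → Fin m → ℝ) :
    ∫⁻ M, deadPot (relu (mulVec M h), f M) ∂gaussMat m q v ≤ 2 * (1 / 2) ^ m := by
  classical
  unfold deadPot
  rw [lintegral_add_right _ measurable_const, two_mul, lintegral_const, measure_univ, mul_one]
  gcongr
  rw [← dead_layer hv hh]
  refine le_trans (le_of_eq ?_) (lintegral_indicator_one_le _)
  refine lintegral_congr fun M => ?_
  simp [Set.indicator]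

lemma deadPot_step (hm : 0 < m) (a ℓ : ℕ) (σ : (Fin m → ℝ) × (Fin m → ℝ)) :
    ∫⁻ M, deadPot (layerStep a ℓ M σ) ∂gaussMat m m (2 / m) ≤ 2 * deadPot σ := by
  obtain ⟨h, z⟩ := σ
  have hv : (2 / m : NNReal) ≠ 0 := by positivity
  by_cases hh : h = 0
  · subst hh
    simp only [deadPot, layerStep, relu_mulVec_zero, if_true, lintegral_const, measure_univ,
      mul_one]
    exact le_mul_of_one_le_left (zero_le) (by norm_num)
  · refine (lintegral_dead_le hv hh _).trans ?_
    simp [deadPot, hh]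

/-! ### Measurability of the network -/

section Meas
variable {Y : Type*} [MeasurableSpace Y]

lemma measurable_mulVec {p q : ℕ} {f : Y → Fin p → Fin q → ℝ} {g : Y → Fin q → ℝ}
    (hf : Measurable f) (hg : Measurable g) : Measurable fun y => mulVec (f y) (g y) := by
  unfold mulVec; fun_prop

lemma measurable_relu {p : ℕ} {g : Y → Fin p → ℝ} (hg : Measurable g) :
    Measurable fun y => relu (g y) := by
  unfold relu; fun_prop

lemma measurable_gate {p : ℕ} {f g : Y → Fin p → ℝ} (hf : Measurable f) (hg : Measurable g) :
    Measurable fun y => gate (f y) (g y) := by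
  unfold gate signOf
  refine measurable_pi_lambda _ fun k => Measurable.mul ?_ (by fun_prop)
  exact Measurable.ite (measurableSet_le measurable_const (by fun_prop)) measurable_const
    measurable_const

lemma measurable_sqn {p : ℕ} {g : Y → Fin p → ℝ} (hg : Measurable g) :
    Measurable fun y => sqn (g y) := by
  unfold sqn; fun_prop

lemma measurable_Wat {W : Y → Fin L → Fin m → Fin m → ℝ} (hW : Measurable W) (ℓ : ℕ) :
    Measurable fun y => Wat (W y) ℓ := by
  unfold Wat
  split_ifs
  · fun_prop
  · fun_prop

lemma measurable_hseq {A : Y → Fin m → Fin 𝔡 → ℝ} {W : Y → Fin L → Fin m → Fin m → ℝ}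
    (hA : Measurable A) (hW : Measurable W) (x : Fin 𝔡 → ℝ) (ℓ : ℕ) :
    Measurable fun y => hseq (A y) (W y) x ℓ := by
  induction ℓ with
  | zero => exact measurable_relu (measurable_mulVec hA measurable_const)
  | succ ℓ ih =>
    simp only [hseq]
    split_ifs
    · exact measurable_relu (measurable_mulVec (measurable_Wat hW _) ih)
    · exact ih

lemma measurable_prodDW {A : Y → Fin m → Fin 𝔡 → ℝ} {W : Y → Fin L → Fin m → Fin m → ℝ}
    (hA : Measurable A) (hW : Measurable W) (x : Fin 𝔡 → ℝ) (a : ℕ) (u : Fin m → ℝ) (ℓ : ℕ) :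
    Measurable fun y => mulVec (prodDW (A y) (W y) x a ℓ) u := by
  induction ℓ with
  | zero => simp [prodDW, chainProd]
  | succ ℓ ih =>
    simp only [mulVec_prodDW_succ]
    split_ifs
    · exact measurable_gate (measurable_mulVec (measurable_Wat hW _) (measurable_hseq hA hW x ℓ))
        (measurable_mulVec (measurable_Wat hW _) ih)
    · exact ih

end Meas

/-! ### Moment and death bounds for the whole network -/

instance : IsProbabilityMeasure (initMeasure 𝔡 m d L) := by
  unfold initMeasure; infer_instance

lemma measurable_back (x : Fin 𝔡 → ℝ) (a : ℕ) (u : Fin m → ℝ) :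
    Measurable fun y : (Fin m → Fin 𝔡 → ℝ) × (Fin L → Fin m → Fin m → ℝ) × (Fin d → Fin m → ℝ) =>
      mulVec (backMat y.2.2 y.1 y.2.1 x a) u := by
  simp only [backMat, mulVec_mmul]
  exact measurable_mulVec (by fun_prop) (measurable_prodDW (by fun_prop) (by fun_prop) x a u L)

lemma measurableSet_dead (x : Fin 𝔡 → ℝ) :
    MeasurableSet {y : (Fin m → Fin 𝔡 → ℝ) × (Fin L → Fin m → Fin m → ℝ) × (Fin d → Fin m → ℝ) |
      hseq y.1 y.2.1 x L = 0} :=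
  (measurable_hseq (Y := (Fin m → Fin 𝔡 → ℝ) × (Fin L → Fin m → Fin m → ℝ) × (Fin d → Fin m → ℝ))
    (by fun_prop) (by fun_prop) x L) (measurableSet_singleton 0)

lemma back_moment (hm : 0 < m) (hd : 0 < d) {r : ℝ} (hr : 0 < r) (hrm : r ≤ m / 16)
    (x : Fin 𝔡 → ℝ) (a : ℕ) (u : Fin m → ℝ) :
    ∫⁻ y, livePot r (hseq y.1 y.2.1 x L, mulVec (backMat y.2.2 y.1 y.2.1 x a) u)
        ∂initMeasure 𝔡 m d L
      ≤ ENNReal.ofReal ((4 * r / d) ^ r * Real.exp (-r) * 2 ^ d)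
        * (ENNReal.ofReal (Real.exp (8 * r ^ 2 / m)) ^ L * ENNReal.ofReal (sqn u ^ r)) := by
  set c₁ := ENNReal.ofReal ((4 * r / d) ^ r * Real.exp (-r) * 2 ^ d) with hc₁
  set K := ENNReal.ofReal (Real.exp (8 * r ^ 2 / m)) with hK
  have hc₁t : c₁ ≠ ⊤ := ENNReal.ofReal_ne_top
  unfold initMeasure
  -- For fixed `A`, first `B` and then the layers `W_L, …, W_1` are integrated out.
  have inner : ∀ A : Fin m → Fin 𝔡 → ℝ,
      ∫⁻ y, livePot r (hseq A y.1 x L, mulVec (backMat y.2 A y.1 x a) u)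
        ∂((Measure.pi fun _ : Fin L => gaussMat m m (2 / m)).prod (gaussMat d m (1 / d)))
      ≤ c₁ * (K ^ L * ENNReal.ofReal (sqn u ^ r)) := by
    intro A
    calc _ ≤ ∫⁻ W, ∫⁻ B, livePot r (hseq A W x L, mulVec (backMat B A W x a) u)
            ∂gaussMat d m (1 / d) ∂(Measure.pi fun _ : Fin L => gaussMat m m (2 / m)) :=
          lintegral_prod_le _
      _ ≤ ∫⁻ W, c₁ * livePot r (runSteps (layerStep a) (relu (mulVec A x), u) L W)
            ∂(Measure.pi fun _ : Fin L => gaussMat m m (2 / m)) := by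
          refine lintegral_mono fun W => ?_
          have e := state_eq_runSteps A W x a u L le_rfl
          simp only [Fin.castLE_rfl, id] at e
          dsimp only
          rw [← e]
          by_cases h0 : hseq A W x L = 0
          · simp [livePot, h0]
          · simp only [livePot, h0, if_false, backMat, mulVec_mmul]
            exact output_moment hd _ hr
      _ = c₁ * ∫⁻ W, livePot r (runSteps (layerStep a) (relu (mulVec A x), u) L W)
            ∂(Measure.pi fun _ : Fin L => gaussMat m m (2 / m)) := lintegral_const_mul' _ _ hc₁t
      _ ≤ c₁ * (K ^ L * livePot r (relu (mulVec A x), u)) := by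
          gcongr
          exact lintegral_runSteps_le ENNReal.ofReal_ne_top (livePot_step hm hr hrm a) _ L
      _ ≤ _ := by
          gcongr
          exact livePot_le _ _
  refine (lintegral_prod_le _).trans ?_
  refine (lintegral_mono inner).trans ?_
  simp

/-- Markov's inequality for `back_moment`. -/
lemma back_tail (hm : 0 < m) (hd : 0 < d) {r : ℝ} (hr : 0 < r) (hrm : r ≤ m / 16)
    (x : Fin 𝔡 → ℝ) (a : ℕ) (u : Fin m → ℝ) {T : ℝ} (hT : 0 < T) :
    initMeasure 𝔡 m d L {y | hseq y.1 y.2.1 x L ≠ 0 ∧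
        T * sqn u < sqn (mulVec (backMat y.2.2 y.1 y.2.1 x a) u)}
      ≤ ENNReal.ofReal ((4 * r / d / T) ^ r * Real.exp (8 * r ^ 2 * L / m - r) * 2 ^ d) := by
  classical
  rcases eq_or_ne u 0 with rfl | hu
  · have h0 : sqn (0 : Fin m → ℝ) = 0 := by simp [sqn]
    have h1 : ∀ N : Fin d → Fin m → ℝ, sqn (mulVec N 0) = 0 := by intro N; simp [sqn, mulVec]
    simp [h0, h1]
  have hp := sqn_pos hu
  have hmeas : Measurable fun y : (Fin m → Fin 𝔡 → ℝ) × (Fin L → Fin m → Fin m → ℝ) ×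
      (Fin d → Fin m → ℝ) =>
      livePot r (hseq y.1 y.2.1 x L, mulVec (backMat y.2.2 y.1 y.2.1 x a) u) := by
    unfold livePot
    refine Measurable.ite (measurableSet_dead x) measurable_const ?_
    exact ENNReal.measurable_ofReal.comp ((measurable_sqn (measurable_back x a u)).pow_const r)
  have hpos : 0 < (T * sqn u) ^ r := by positivity
  have hmk := mul_meas_ge_le_lintegral hmeas (μ := initMeasure 𝔡 m d L)
    (ENNReal.ofReal ((T * sqn u) ^ r))
  have hb := hmk.trans (back_moment hm hd hr hrm x a u)
  have hsub : {y : (Fin m → Fin 𝔡 → ℝ) × (Fin L → Fin m → Fin m → ℝ) × (Fin d → Fin m → ℝ) |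
      hseq y.1 y.2.1 x L ≠ 0 ∧ T * sqn u < sqn (mulVec (backMat y.2.2 y.1 y.2.1 x a) u)}
      ⊆ {y | ENNReal.ofReal ((T * sqn u) ^ r)
        ≤ livePot r (hseq y.1 y.2.1 x L, mulVec (backMat y.2.2 y.1 y.2.1 x a) u)} := by
    rintro y ⟨h1, h2⟩
    change _ ≤ livePot _ _
    simp only [livePot, h1, if_false]
    exact ENNReal.ofReal_le_ofReal (Real.rpow_le_rpow (by positivity) h2.le hr.le)
  refine (measure_mono hsub).trans ?_
  rw [← ENNReal.mul_le_mul_iff_right (a := ENNReal.ofReal ((T * sqn u) ^ r))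
    (by simpa using hpos) ENNReal.ofReal_ne_top]
  refine hb.trans (le_of_eq ?_)
  rw [← ENNReal.ofReal_pow (by positivity), ← ENNReal.ofReal_mul (by positivity),
    ← ENNReal.ofReal_mul (by positivity), ← ENNReal.ofReal_mul (by positivity)]
  congr 1
  rw [← Real.exp_nat_mul, Real.mul_rpow hT.le hp.le, Real.div_rpow (by positivity) hT.le,
    sub_eq_add_neg, Real.exp_add]
  have : (L : ℝ) * (8 * r ^ 2 / m) = 8 * r ^ 2 * L / m := by ring
  rw [this]
  have hTr : T ^ r ≠ 0 := by positivity
  field_simp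

lemma dead_prob (hm : 0 < m) {x : Fin 𝔡 → ℝ} (hx : x ≠ 0) :
    initMeasure 𝔡 m d L {y | hseq y.1 y.2.1 x L = 0} ≤ 2 ^ (L + 1) * (1 / 2) ^ m := by
  classical
  have hv : (2 / m : NNReal) ≠ 0 := by positivity
  rw [← lintegral_indicator_one (measurableSet_dead x)]
  unfold initMeasure
  refine (lintegral_prod_le _).trans ?_
  calc _ ≤ ∫⁻ A, 2 ^ L * deadPot (relu (mulVec A x), (0 : Fin m → ℝ)) ∂gaussMat m 𝔡 (2 / m) := by
        refine lintegral_mono fun A => ?_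
        refine (lintegral_prod_le _).trans ?_
        refine le_trans (lintegral_mono fun W => ?_)
          (lintegral_runSteps_le (by simp) (deadPot_step hm 0) (relu (mulVec A x), 0) L)
        have e := state_eq_runSteps A W x 0 0 L le_rfl
        simp only [Fin.castLE_rfl, id] at e
        rw [← e]
        by_cases h0 : hseq A W x L = 0
        · simp [deadPot, h0, Set.indicator]
        · simp [h0, Set.indicator]
    _ = 2 ^ L * ∫⁻ A, deadPot (relu (mulVec A x), (0 : Fin m → ℝ)) ∂gaussMat m 𝔡 (2 / m) :=
        lintegral_const_mul' _ _ (by simp)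
    _ ≤ 2 ^ L * (2 * (1 / 2) ^ m) := by
        gcongr
        exact lintegral_dead_le hv hx fun _ => 0
    _ = _ := by ring

/-! ### A grid net of sparse vectors -/

lemma l2_eq_norm {p : ℕ} (v : Fin p → ℝ) : l2 v = ‖WithLp.toLp 2 v‖ := by
  simp [l2, EuclideanSpace.norm_eq]

lemma l2_eq_sqrt_sqn {p : ℕ} (v : Fin p → ℝ) : l2 v = Real.sqrt (sqn v) := rfl

lemma l2_nonneg {p : ℕ} (v : Fin p → ℝ) : 0 ≤ l2 v := Real.sqrt_nonneg _

lemma l2_add_le {p : ℕ} (v w : Fin p → ℝ) : l2 (v + w) ≤ l2 v + l2 w := by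
  simp only [l2_eq_norm, WithLp.toLp_add]
  exact norm_add_le _ _

lemma l2_smul {p : ℕ} (c : ℝ) (v : Fin p → ℝ) : l2 (c • v) = |c| * l2 v := by
  simp only [l2_eq_norm, WithLp.toLp_smul, norm_smul, Real.norm_eq_abs]

lemma l2_sum_le {p : ℕ} {ι : Type*} (s : Finset ι) (v : ι → Fin p → ℝ) :
    l2 (∑ k ∈ s, v k) ≤ ∑ k ∈ s, l2 (v k) := by
  simp only [l2_eq_norm, WithLp.toLp_sum]
  exact norm_sum_le _ _

lemma l2_mono {p : ℕ} {v w : Fin p → ℝ} (h : ∀ k, |v k| ≤ |w k|) : l2 v ≤ l2 w :=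
  Real.sqrt_le_sqrt (Finset.sum_le_sum fun k _ => sq_le_sq.2 (h k))

lemma abs_dot_le {p : ℕ} (v w : Fin p → ℝ) : |dot v w| ≤ l2 v * l2 w := by
  unfold dot l2
  rw [← Real.sqrt_mul (Finset.sum_nonneg fun _ _ => sq_nonneg _)]
  exact Real.abs_le_sqrt (Finset.sum_mul_sq_le_sq_mul_sq _ _ _)

lemma mulVec_add {p q : ℕ} (M : Fin p → Fin q → ℝ) (u w : Fin q → ℝ) :
    mulVec M (u + w) = mulVec M u + mulVec M w := by
  funext i; simp [mulVec, mul_add, Finset.sum_add_distrib]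

lemma mulVec_smul {p q : ℕ} (M : Fin p → Fin q → ℝ) (c : ℝ) (u : Fin q → ℝ) :
    mulVec M (c • u) = c • mulVec M u := by
  funext i; simp [mulVec, Finset.mul_sum, mul_left_comm]

lemma mulVec_eq_sum {p q : ℕ} (M : Fin p → Fin q → ℝ) (u : Fin q → ℝ) :
    mulVec M u = ∑ k, u k • mulVec M (Pi.single k 1) := by
  funext i
  simp [mulVec, Pi.single_apply, mul_comm]

/-- The grid vector encoded by `s` (position, level) pairs: level `c` stands for the coordinate
`(c - m) / m`, and all positions not listed are zero. When a position is listed repeatedly an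
arbitrary one of its levels is used. -/
def netVec {m s : ℕ} (f : Fin s → Fin m × Fin (2 * m + 1)) : Fin m → ℝ :=
  open Classical in
  fun k => if h : ∃ j, (f j).1 = k then (((f h.choose).2 : ℕ) - (m : ℝ)) / m else 0

lemma exists_netVec {s : ℕ} {S : Finset (Fin m)} (hS : S.Nonempty) (hs : S.card ≤ s)
    {c : Fin m → ℤ} (hc : ∀ k, |c k| ≤ m) (hc0 : ∀ k, k ∉ S → c k = 0) :
    ∃ f : Fin s → Fin m × Fin (2 * m + 1), netVec f = fun k => (c k : ℝ) / m := by
  classical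
  obtain ⟨e⟩ : Nonempty (S ↪ Fin s) := Function.Embedding.nonempty_of_card_le (by simpa using hs)
  have : Nonempty S := hS.to_subtype
  have hg := Function.invFun_surjective e.injective
  set g := Function.invFun e
  refine ⟨fun j => (g j, ⟨(c (g j) + m).toNat, ?_⟩), ?_⟩
  · have := abs_le.1 (hc (g j))
    omega
  funext k
  unfold netVec
  split_ifs with h
  · have hk := h.choose_spec
    simp only at hk ⊢
    rw [hk]
    have := abs_le.1 (hc k)
    have h2 : (((c k + m).toNat : ℤ) : ℝ) = c k + m := by
      rw [Int.toNat_of_nonneg (by omega)]; push_cast; ring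
    rw [← Int.cast_natCast, h2]
    ring
  · have : k ∉ S := fun hk => h (by
      obtain ⟨j, hj⟩ := hg ⟨k, hk⟩
      exact ⟨j, by simp [hj]⟩)
    simp [hc0 k this]

/-- Rounding toward zero. -/
lemma exists_round (m : ℕ) (y : ℝ) :
    ∃ c : ℤ, |(c : ℝ)| ≤ |y * m| ∧ |y * m - c| ≤ 1 ∧ (y = 0 → c = 0) := by
  rcases le_total 0 (y * m) with h | h
  · refine ⟨⌊y * m⌋, ?_, ?_, ?_⟩
    · rw [abs_of_nonneg h, abs_of_nonneg (by exact_mod_cast Int.floor_nonneg.2 h)]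
      exact Int.floor_le _
    · have := Int.floor_le (y * m)
      have := Int.lt_floor_add_one (y * m)
      rw [abs_le]; constructor <;> linarith
    · rintro rfl; simp
  · refine ⟨⌈y * m⌉, ?_, ?_, ?_⟩
    · rw [abs_of_nonpos h, abs_of_nonpos (by exact_mod_cast Int.ceil_nonpos.2 h)]
      have := Int.le_ceil (y * m)
      linarith
    · have := Int.le_ceil (y * m)
      have := Int.ceil_lt_add_one (y * m)
      rw [abs_le]; constructor <;> linarith
    · rintro rfl; simp

/-- A bound on the grid extends to all sparse vectors at the cost of a factor `2`. The rounding
error has entries at most `1 / m`, so it is handled column by column: unit vectors lie on the grid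
and `s ≤ m`. -/
lemma bound_of_net {s : ℕ} (hm : 0 < m) (hs1 : 1 ≤ s) (hsm : s ≤ m) (M : Fin d → Fin m → ℝ) {T : ℝ}
    (hT : 0 ≤ T)
    (hnet : ∀ f : Fin s → Fin m × Fin (2 * m + 1),
      sqn (mulVec M (netVec f)) ≤ T ^ 2 * sqn (netVec f))
    (u : Fin m → ℝ) (hu : l0 u ≤ s) : l2 (mulVec M u) ≤ 2 * T * l2 u := by
  have hm' : (0 : ℝ) < m := by exact_mod_cast hm
  have hnet' : ∀ f : Fin s → Fin m × Fin (2 * m + 1),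
      l2 (mulVec M (netVec f)) ≤ T * l2 (netVec f) := by
    intro f
    rw [l2_eq_sqrt_sqn, l2_eq_sqrt_sqn]
    calc _ ≤ Real.sqrt (T ^ 2 * sqn (netVec f)) := Real.sqrt_le_sqrt (hnet f)
      _ = _ := by rw [Real.sqrt_mul (sq_nonneg _), Real.sqrt_sq hT]
  rcases eq_or_ne u 0 with rfl | hu0
  · simp [mulVec, l2]
  set ρ := l2 u with hρd
  have hρ : 0 < ρ := Real.sqrt_pos.2 (sqn_pos hu0)
  have huρ : ∀ k, |u k| ≤ ρ := fun k => Real.abs_le_sqrt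
    (Finset.single_le_sum (f := fun k => u k ^ 2) (fun _ _ => sq_nonneg _) (Finset.mem_univ k))
  set S : Finset (Fin m) := Finset.univ.filter fun k => u k ≠ 0 with hSd
  have hS : S.Nonempty := by
    obtain ⟨k, hk⟩ := Function.ne_iff.1 hu0
    exact ⟨k, by simpa [hSd] using hk⟩
  choose c hc1 hc2 hc3 using fun k => exists_round m (u k / ρ)
  have hcm : ∀ k, |c k| ≤ m := by
    intro k
    have h1 : |u k / ρ * m| ≤ m := by
      rw [abs_mul, abs_div, abs_of_pos hρ, abs_of_pos hm']
      exact mul_le_of_le_one_left hm'.le ((div_le_one hρ).2 (huρ k))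
    have := (hc1 k).trans h1
    exact_mod_cast this
  obtain ⟨f, hf⟩ := exists_netVec hS hu hcm fun k hk => hc3 k (by
    have : u k = 0 := by simpa [hSd] using hk
    simp [this])
  set e : Fin m → ℝ := u - ρ • netVec f with he
  have hek : ∀ k, e k = ρ / m * (u k / ρ * m - c k) := by
    intro k
    simp only [he, hf, Pi.sub_apply, Pi.smul_apply, smul_eq_mul]
    field_simp
  have he0 : ∀ k, k ∉ S → e k = 0 := by
    intro k hk
    have h0 : u k = 0 := by simpa [hSd] using hk
    rw [hek, hc3 k (by simp [h0]), h0]; simp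
  have he1 : ∀ k, |e k| ≤ ρ / m := by
    intro k
    rw [hek, abs_mul, abs_of_pos (by positivity : 0 < ρ / m)]
    exact mul_le_of_le_one_right (by positivity) (hc2 k)
  have hunit : ∀ k : Fin m, l2 (mulVec M (Pi.single k 1)) ≤ T := by
    intro k
    obtain ⟨g, hg⟩ := exists_netVec (m := m) (s := s) (S := {k}) (by simp) (by simpa using hs1)
      (c := Pi.single k (m : ℤ)) (fun j => by
        rcases eq_or_ne j k with rfl | h
        · simp
        · simp [h]) (fun j hj => by
        have : j ≠ k := by simpa using hj
        simp [this])
    have hg' : netVec g = Pi.single k 1 := by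
      rw [hg]; funext j
      rcases eq_or_ne j k with rfl | h
      · simp [hm'.ne']
      · simp [h]
    have h1 := hnet' g
    rw [hg'] at h1
    have h2 : l2 (Pi.single k 1 : Fin m → ℝ) = 1 := by
      simp [l2_eq_norm]
    rw [h2, mul_one] at h1
    exact h1
  have hmain : l2 (mulVec M (ρ • netVec f)) ≤ T * ρ := by
    have h1 : l2 (ρ • netVec f) ≤ ρ := by
      apply l2_mono
      intro k
      simp only [hf, Pi.smul_apply, smul_eq_mul]
      rw [abs_mul, abs_div, abs_of_pos hρ, abs_of_pos hm']
      have := hc1 k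
      rw [abs_mul, abs_div, abs_of_pos hρ, abs_of_pos hm'] at this
      calc ρ * (|(c k : ℝ)| / m) ≤ ρ * ((|u k| / ρ * m) / m) := by gcongr
        _ = |u k| := by field_simp
    rw [mulVec_smul, l2_smul]
    calc _ ≤ |ρ| * (T * l2 (netVec f)) := by gcongr; exact hnet' f
      _ = T * l2 (ρ • netVec f) := by rw [l2_smul]; ring
      _ ≤ T * ρ := by gcongr
  have herr : l2 (mulVec M e) ≤ T * ρ := by
    rw [mulVec_eq_sum]
    calc _ ≤ ∑ k, l2 (e k • mulVec M (Pi.single k 1)) := l2_sum_le _ _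
      _ = ∑ k ∈ S, l2 (e k • mulVec M (Pi.single k 1)) := by
        refine (Finset.sum_subset (Finset.subset_univ S) fun k _ hk => ?_).symm
        rw [he0 k hk, l2_smul]; simp
      _ ≤ ∑ k ∈ S, ρ / m * T := by
        refine Finset.sum_le_sum fun k _ => ?_
        rw [l2_smul]
        exact mul_le_mul (he1 k) (hunit k) (l2_nonneg _) (by positivity)
      _ = S.card * (ρ / m * T) := by simp
      _ ≤ m * (ρ / m * T) := by
        gcongr
        exact hu.trans hsm
      _ = T * ρ := by field_simp
  have : mulVec M u = mulVec M (ρ • netVec f) + mulVec M e := by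
    rw [← mulVec_add, he]; congr 1; abel
  rw [this]
  refine (l2_add_le _ _).trans ?_
  linarith

/-! ### Union bound -/

/-- Union bound over the samples, the starting layers and the grid, before any choice of
parameters. -/
lemma compl_measure_le {n s : ℕ} (hm : 0 < m) (hs1 : 1 ≤ s) (hsm : s ≤ m)
    {x : Fin n → Fin 𝔡 → ℝ} {T : ℝ} (hT : 0 ≤ T) {δ ε : ENNReal}
    (hdead : ∀ i, initMeasure 𝔡 m d L {y | hseq y.1 y.2.1 (x i) L = 0} ≤ δ)
    (htail : ∀ i a u, initMeasure 𝔡 m d L {y | hseq y.1 y.2.1 (x i) L ≠ 0 ∧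
        T ^ 2 * sqn u < sqn (mulVec (backMat y.2.2 y.1 y.2.1 (x i) a) u)} ≤ ε) :
    initMeasure 𝔡 m d L
        {z | ∀ (i : Fin n) (a : ℕ), 1 ≤ a → a ≤ L + 1 →
          ∀ (v : Fin d → ℝ) (u : Fin m → ℝ), l0 u ≤ s →
            |dot v (mulVec (backMat z.2.2 z.1 z.2.1 (x i) a) u)| ≤ 2 * T * l2 v * l2 u}ᶜ
      ≤ n * δ + (n * (L + 2) * (m * (2 * m + 1)) ^ s) * ε := by
  set D : Fin n → Set ((Fin m → Fin 𝔡 → ℝ) × (Fin L → Fin m → Fin m → ℝ) × (Fin d → Fin m → ℝ)) :=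
    fun i => {y | hseq y.1 y.2.1 (x i) L = 0} with hD
  set E : Fin n × Fin (L + 2) × (Fin s → Fin m × Fin (2 * m + 1)) →
      Set ((Fin m → Fin 𝔡 → ℝ) × (Fin L → Fin m → Fin m → ℝ) × (Fin d → Fin m → ℝ)) :=
    fun j => {y | hseq y.1 y.2.1 (x j.1) L ≠ 0 ∧ T ^ 2 * sqn (netVec j.2.2)
      < sqn (mulVec (backMat y.2.2 y.1 y.2.1 (x j.1) j.2.1) (netVec j.2.2))} with hE
  have hsub : {z : (Fin m → Fin 𝔡 → ℝ) × (Fin L → Fin m → Fin m → ℝ) × (Fin d → Fin m → ℝ) |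
      ∀ (i : Fin n) (a : ℕ), 1 ≤ a → a ≤ L + 1 →
          ∀ (v : Fin d → ℝ) (u : Fin m → ℝ), l0 u ≤ s →
            |dot v (mulVec (backMat z.2.2 z.1 z.2.1 (x i) a) u)| ≤ 2 * T * l2 v * l2 u}ᶜ
      ⊆ (⋃ i, D i) ∪ ⋃ j, E j := by
    intro y hy
    by_contra hcon
    apply hy
    intro i a _ ha v u hu
    have h1 : hseq y.1 y.2.1 (x i) L ≠ 0 := fun h =>
      hcon (Or.inl (Set.mem_iUnion.2 ⟨i, h⟩))
    have h2 := bound_of_net hm hs1 hsm (backMat y.2.2 y.1 y.2.1 (x i) a) hT (fun f => by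
      by_contra hlt
      exact hcon (Or.inr (Set.mem_iUnion.2 ⟨(i, ⟨a, by omega⟩, f), h1, not_le.1 hlt⟩))) u hu
    calc _ ≤ l2 v * l2 (mulVec (backMat y.2.2 y.1 y.2.1 (x i) a) u) := abs_dot_le _ _
      _ ≤ l2 v * (2 * T * l2 u) := by
        gcongr
        exact l2_nonneg _
      _ = _ := by ring
  refine (measure_mono hsub).trans ((measure_union_le _ _).trans ?_)
  gcongr
  · refine (measure_iUnion_fintype_le _ _).trans ?_
    refine (Finset.sum_le_sum fun i _ => hdead i).trans ?_
    simp
  · refine (measure_iUnion_fintype_le _ _).trans ?_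
    refine (Finset.sum_le_sum fun j _ => htail j.1 j.2.1 (netVec j.2.2)).trans ?_
    simp [mul_assoc]

/-- Bound on the dead-network term of the union bound. -/
lemma dead_numeric {n L m : ℕ} {Λ : ℝ} (h1 : (n + L + 2 : ℝ) ≤ m / 2) (h2 : Λ ≤ m / 4) :
    (n : ENNReal) * (2 ^ (L + 1) * (1 / 2) ^ m) ≤ ENNReal.ofReal (Real.exp (-Λ) / 2) := by
  have e : (n : ENNReal) * (2 ^ (L + 1) * (1 / 2) ^ m)
      = ENNReal.ofReal (n * (2 ^ (L + 1) * (1 / 2) ^ m)) := by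
    rw [ENNReal.ofReal_mul (by positivity), ENNReal.ofReal_mul (by positivity),
      ENNReal.ofReal_pow (by positivity), ENNReal.ofReal_pow (by positivity),
      ENNReal.ofReal_div_of_pos (by norm_num)]
    simp
  rw [e]
  apply ENNReal.ofReal_le_ofReal
  have hn : (n : ℝ) ≤ 2 ^ n := by exact_mod_cast Nat.lt_two_pow_self.le
  have hl : (1 / 2 : ℝ) ≤ Real.log 2 := by
    have := Real.log_two_gt_d9; linarith
  have two_pow : ∀ k : ℕ, (2 : ℝ) ^ k = Real.exp (k * Real.log 2) := by
    intro k
    rw [Real.exp_nat_mul, Real.exp_log (by norm_num)]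
  calc (n : ℝ) * (2 ^ (L + 1) * (1 / 2) ^ m) ≤ 2 ^ n * (2 ^ (L + 1) * (1 / 2) ^ m) := by gcongr
    _ = Real.exp ((n + L + 2 - m) * Real.log 2) / 2 := by
      have : (n + L + 2 - m : ℝ) * Real.log 2
          = ((n + (L + 1) + 1 : ℕ) : ℝ) * Real.log 2 - (m : ℝ) * Real.log 2 := by
        push_cast; ring
      rw [this, Real.exp_sub, ← two_pow, ← two_pow, one_div, inv_pow]
      field_simp
      ring
    _ ≤ Real.exp (-Λ) / 2 := by
      gcongr
      nlinarith

/-- Bound on the tail term of the union bound. -/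
lemma tail_numeric {n L m s : ℕ} {K : ℝ} (hm : 3 ≤ m) (hn : 0 < n) (hL : 2 ≤ L)
    (h1 : (2 * n * L : ℝ) ≤ m) (hs : 1 ≤ s) (hlog : 1 ≤ Real.log m)
    (hK : 6 * (s * Real.log m) ≤ K) :
    ((n : ENNReal) * (L + 2) * (m * (2 * m + 1)) ^ s) * ENNReal.ofReal (Real.exp (-K))
      ≤ ENNReal.ofReal (Real.exp (-(s * Real.log m)) / 2) := by
  have hm' : (3 : ℝ) ≤ m := by exact_mod_cast hm
  have hs' : (1 : ℝ) ≤ s := by exact_mod_cast hs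
  have hL' : (2 : ℝ) ≤ L := by exact_mod_cast hL
  set Λ : ℝ := s * Real.log m with hΛ
  have hΛ1 : 1 ≤ Λ := by nlinarith
  have e : ((n : ENNReal) * (L + 2) * (m * (2 * m + 1)) ^ s)
      = ENNReal.ofReal (n * (L + 2) * (m * (2 * m + 1)) ^ s) := by
    have : ((n * (L + 2) * (m * (2 * m + 1)) ^ s : ℝ))
        = ((n * (L + 2) * (m * (2 * m + 1)) ^ s : ℕ) : ℝ) := by push_cast; ring
    rw [this, ENNReal.ofReal_natCast]
    push_cast; ring
  rw [e, ← ENNReal.ofReal_mul (by positivity)]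
  apply ENNReal.ofReal_le_ofReal
  have hmexp : (m : ℝ) ^ s = Real.exp Λ := by
    rw [hΛ, Real.exp_nat_mul, Real.exp_log (by linarith)]
  have a1 : (n * (L + 2) : ℝ) ≤ Real.exp Λ := by
    calc (n * (L + 2) : ℝ) ≤ n * (2 * L) := by gcongr; linarith
      _ ≤ m := by linarith
      _ = (m : ℝ) ^ 1 := by simp
      _ ≤ (m : ℝ) ^ s := pow_le_pow_right₀ (by linarith) hs
      _ = _ := hmexp
  have a2 : (m * (2 * m + 1) : ℝ) ^ s ≤ Real.exp Λ ^ 3 := by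
    rw [← hmexp, ← pow_mul, mul_comm s 3, pow_mul]
    gcongr
    calc (m : ℝ) * (2 * m + 1) ≤ m * m ^ 2 := by gcongr; nlinarith
      _ = m ^ 3 := by ring
  have a3 : (2 : ℝ) ≤ Real.exp Λ := by
    have := Real.add_one_le_exp Λ; linarith
  have hpos := Real.exp_pos Λ
  have a4 : Real.exp (-K) ≤ Real.exp (-Λ) * (Real.exp Λ ^ 5)⁻¹ := by
    rw [← Real.exp_nat_mul, ← Real.exp_neg, ← Real.exp_add]
    gcongr
    push_cast
    linarith
  calc n * (L + 2) * (m * (2 * m + 1)) ^ s * Real.exp (-K)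
      ≤ Real.exp Λ * Real.exp Λ ^ 3 * (Real.exp (-Λ) * (Real.exp Λ ^ 5)⁻¹) := by gcongr
    _ = Real.exp (-Λ) / Real.exp Λ := by field_simp
    _ ≤ Real.exp (-Λ) / 2 := by gcongr

/-- Lemma 7.3 a, backward propagation bound, sparse version. -/
theorem statement8 :
    ∃ C c : ℝ, 0 < C ∧ 0 < c ∧
      ∀ (𝔡 m d L n : ℕ) (h𝔡 : 0 < 𝔡) (hL : 2 ≤ L) (hm : 0 < m) (hd : 0 < d) (hn : 0 < n)
        (x : Fin n → Fin 𝔡 → ℝ), (∀ i, l2 (x i) = 1) →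
        C * (n : ℝ) * (L : ℝ) * Real.log ((n : ℝ) * (L : ℝ)) ≤ (m : ℝ) →
        ∀ s : ℕ, (d : ℝ) / (C * Real.log m) ≤ (s : ℝ) →
          (s : ℝ) ≤ (m : ℝ) / (C * (L : ℝ) * Real.log m) →
        ENNReal.ofReal (1 - Real.exp (-(c * (s : ℝ) * Real.log m))) ≤
          initMeasure 𝔡 m d L
            {z | ∀ (i : Fin n) (a : ℕ), 1 ≤ a → a ≤ L + 1 →
              ∀ (v : Fin d → ℝ) (u : Fin m → ℝ), l0 u ≤ s →
                |dot v (mulVec (backMat z.2.2 z.1 z.2.1 (x i) a) u)| ≤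
                  C * Real.sqrt ((s : ℝ) * Real.log m / (d : ℝ)) * l2 v * l2 u} := by
  -- With `2 / C = exp (-16)` the tail `(2 / C) ^ (C Λ / 8)` is `exp (-2 C Λ)`, where
  -- `Λ = s log m`; this beats the factor `2 ^ d ≤ exp (C Λ)` coming from the output layer.
  obtain ⟨C, hC, hClarge⟩ : ∃ C : ℝ, C = 2 * Real.exp 16 ∧ 100 ≤ C := by
    refine ⟨_, rfl, ?_⟩
    have h1 : Real.exp 16 = Real.exp 1 ^ 16 := by rw [← Real.exp_nat_mul]; norm_num
    have h2 : (2 : ℝ) ^ 16 ≤ Real.exp 1 ^ 16 := by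
      gcongr
      have := Real.exp_one_gt_d9; linarith
    rw [h1]
    norm_num at h2 ⊢
    linarith
  refine ⟨C, 1, by linarith, one_pos, ?_⟩
  intro 𝔡 m d L n _ hL hm hd hn x hx hmC s hs1 hs2
  have hC0 : 0 < C := by linarith
  have hL' : (2 : ℝ) ≤ L := by exact_mod_cast hL
  have hn' : (1 : ℝ) ≤ n := by exact_mod_cast hn
  have hd' : (0 : ℝ) < d := by exact_mod_cast hd
  have hnL : (2 : ℝ) ≤ n * L := by nlinarith
  have hlognL : 1 / 2 ≤ Real.log (n * L) := by
    have h1 := Real.log_two_gt_d9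
    have h2 := Real.log_le_log (by norm_num) hnL
    linarith
  have hmC' : 50 * (n * L : ℝ) ≤ m := by
    refine le_trans ?_ hmC
    rw [mul_assoc C]
    have : C * (n * L) * (1 / 2) ≤ C * (n * L) * Real.log (n * L) := by gcongr
    nlinarith
  have hm100 : (100 : ℝ) ≤ m := by linarith
  have hm3 : 3 ≤ m := by
    have : (3 : ℝ) ≤ m := by linarith
    exact_mod_cast this
  have hlog : 1 ≤ Real.log m := by
    rw [Real.le_log_iff_exp_le (by linarith)]
    have := Real.exp_one_lt_d9
    linarith
  have hlog0 : 0 < Real.log m := by linarith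
  have hs0 : (0 : ℝ) < s := lt_of_lt_of_le (by positivity) hs1
  have hs : 1 ≤ s := by exact_mod_cast hs0
  set Λ : ℝ := s * Real.log m with hΛ
  have hΛ0 : 0 < Λ := by positivity
  have hdΛ : (d : ℝ) ≤ C * Λ := by
    rw [div_le_iff₀ (by positivity)] at hs1
    rw [hΛ]; linarith
  have hΛm : C * Λ * L ≤ m := by
    rw [le_div_iff₀ (by positivity)] at hs2
    rw [hΛ]; linarith
  have hΛm2 : C * Λ ≤ m / 2 := by nlinarith [mul_pos hC0 hΛ0]
  have hsΛ : (s : ℝ) ≤ Λ := by rw [hΛ]; nlinarith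
  have hΛm3 : 100 * Λ ≤ m / 2 := by nlinarith
  have hsm : s ≤ m := by
    have : (s : ℝ) ≤ m := by linarith
    exact_mod_cast this
  set r : ℝ := C * Λ / 8 with hr
  have hr0 : 0 < r := by positivity
  set T : ℝ := C / 2 * Real.sqrt (Λ / d) with hT
  have hT0 : 0 < T := by positivity
  have hT2 : T ^ 2 = C ^ 2 / 4 * (Λ / d) := by
    rw [hT, mul_pow, Real.sq_sqrt (by positivity)]; ring
  have hratio : 4 * r / d / T ^ 2 = Real.exp (-16) := by
    have h1 : Real.exp (-16) = 2 / C := by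
      rw [hC, Real.exp_neg]
      field_simp
    rw [h1, hT2, hr]
    field_simp
    ring
  have htail : ∀ i a u, initMeasure 𝔡 m d L {y | hseq y.1 y.2.1 (x i) L ≠ 0 ∧
      T ^ 2 * sqn u < sqn (mulVec (backMat y.2.2 y.1 y.2.1 (x i) a) u)}
      ≤ ENNReal.ofReal (Real.exp (-(C * Λ))) := by
    intro i a u
    refine (back_tail hm hd hr0 (by rw [hr]; linarith) (x i) a u (pow_pos hT0 2)).trans ?_
    apply ENNReal.ofReal_le_ofReal
    rw [hratio, ← Real.exp_mul]
    have h2 : (2 : ℝ) ^ d ≤ Real.exp (C * Λ) := by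
      calc (2 : ℝ) ^ d ≤ Real.exp 1 ^ d := by
            gcongr
            have := Real.exp_one_gt_d9; linarith
        _ = Real.exp d := by rw [← Real.exp_nat_mul, mul_one]
        _ ≤ _ := by gcongr
    have h3 : 8 * r ^ 2 * L / m - r ≤ 0 := by
      rw [sub_nonpos, div_le_iff₀ (by positivity)]
      have : 8 * r ^ 2 * L = r * (C * Λ * L) := by rw [hr]; ring
      rw [this]
      gcongr
    calc Real.exp (-16 * r) * Real.exp (8 * r ^ 2 * L / m - r) * 2 ^ d
        ≤ Real.exp (-16 * r) * Real.exp 0 * Real.exp (C * Λ) := by gcongr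
      _ = Real.exp (-(C * Λ)) := by
        rw [← Real.exp_add, ← Real.exp_add, hr]
        congr 1; ring
  have hdead : ∀ i, initMeasure 𝔡 m d L {y | hseq y.1 y.2.1 (x i) L = 0}
      ≤ 2 ^ (L + 1) * (1 / 2) ^ m := by
    intro i
    refine dead_prob hm fun h0 => ?_
    have := hx i
    rw [h0] at this
    simp [l2] at this
  have hcompl := compl_measure_le (d := d) (L := L) hm hs hsm (x := x) hT0.le hdead htail
  have h2T : 2 * T = C * Real.sqrt (Λ / d) := by rw [hT]; ring
  rw [h2T] at hcompl
  have hnum1 : (n : ENNReal) * (2 ^ (L + 1) * (1 / 2) ^ m)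
      ≤ ENNReal.ofReal (Real.exp (-Λ) / 2) := by
    refine dead_numeric ?_ (by linarith)
    nlinarith
  have hnum2 := tail_numeric (K := C * Λ) hm3 hn hL (by linarith) hs hlog (by
    rw [← hΛ]; nlinarith)
  have htotal := hcompl.trans (add_le_add hnum1 hnum2)
  rw [← hΛ, ← ENNReal.ofReal_add (by positivity) (by positivity), add_halves] at htotal
  rw [one_mul, ← hΛ, ENNReal.ofReal_sub _ (Real.exp_pos _).le, ENNReal.ofReal_one,
    tsub_le_iff_right]
  refine le_trans ?_ (add_le_add_right htotal _)
  rw [← measure_univ (μ := initMeasure 𝔡 m d L), ← Set.union_compl_self]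
  exact measure_union_le _ _

end DNNPaper
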